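/- Let m ≥ 2 be a natural number and let A_m : ℕ → ℕ → ℕ be defined by A_m(i,0) = 1 if i = 0 and 0 otherwise; A_m(0,n+1) = m·A_m(1,n); and A_m(i+1,n+1) = A_m(i,n) + (m−1)·A_m(i+2,n). For each i let F_i ∈ ℚ[[X]] be the power series whose n-th coefficient is A_m(i,n). Then for every i ≥ 1, F_{i−1} · F_{i+1} = F_i², i.e., the sequence of generating functions F_0, F_1, F_2, … is a geometric progression in ℚ[[X]]. -/

import Mathlib

open PowerSeries

/-!
Decomposing a walk from the root to distance `i` at its last visits to distances `0, …, i - 1`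
suggests the factorization `F i = F 0 * (X * a) ^ i`, where `a` counts the closed walks that never
come closer to the root than their starting point, so that `a = 1 + c * X ^ 2 * a ^ 2` with
`c = m - 1`. This quadratic equation makes `F 0 * (X * a) ^ i` a solution of
`F (i + 1) = X * (F i + c * F (i + 2))`. A solution is determined by `F 0`, because the difference
of two solutions agreeing at `0` is divisible by every power of `X`.
-/

theorem eq_zero_of_forall_X_pow_dvd {R : Type*} [Semiring R] {f : R⟦X⟧}
    (h : ∀ k, X ^ k ∣ f) : f = 0 := by
  ext n
  exact X_pow_dvd_iff.mp (h (n + 1)) n n.lt_succ_self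

section ThreeTermRecurrence

variable {R : Type*} [CommRing R]

theorem eq_of_three_term_recurrence {c : R⟦X⟧} {F G : ℕ → R⟦X⟧} (h₀ : F 0 = G 0)
    (hF : ∀ i, F (i + 1) = X * (F i + c * F (i + 2)))
    (hG : ∀ i, G (i + 1) = X * (G i + c * G (i + 2))) : F = G := by
  have sub_succ (i : ℕ) :
      F (i + 1) - G (i + 1) = X * ((F i - G i) + c * (F (i + 2) - G (i + 2))) := by
    linear_combination hF i - hG i
  have X_pow_dvd (k : ℕ) : ∀ i, X ^ k ∣ F i - G i := by
    induction k with
    | zero => simp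
    | succ k ih =>
      rintro (_ | i)
      · simp [h₀]
      · rw [sub_succ, pow_succ']
        exact mul_dvd_mul_left X (dvd_add (ih i) ((ih (i + 2)).mul_left c))
  funext i
  exact sub_eq_zero.mp (eq_zero_of_forall_X_pow_dvd fun k ↦ X_pow_dvd k i)

/-- The generating function `a` of Dyck paths by length, each down step carrying the weight `c`.
There are `catalan k` Dyck paths of length `2 * k`, so it is obtained by substituting `c * X ^ 2`
into the Catalan series. The weight may itself be a power series. -/
noncomputable def weightedDyckSeries (c : R⟦X⟧) : R⟦X⟧ :=
  (catalanSeries.map (Nat.castRingHom R)).subst (c * X ^ 2)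

theorem weightedDyckSeries_eq (c : R⟦X⟧) :
    weightedDyckSeries c = 1 + c * X ^ 2 * weightedDyckSeries c ^ 2 := by
  have hc : HasSubst (c * X ^ 2) := HasSubst.of_constantCoeff_zero' (by simp)
  have h := congrArg (fun f ↦ substAlgHom hc (f.map (Nat.castRingHom R)))
    catalanSeries_sq_mul_X_add_one
  simp only [map_add, map_mul, map_pow, map_one, map_X, substAlgHom_X, coe_substAlgHom] at h
  rw [weightedDyckSeries]
  linear_combination -h

theorem eq_mul_pow_of_three_term_recurrence {c : R⟦X⟧} {F : ℕ → R⟦X⟧}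
    (hF : ∀ i, F (i + 1) = X * (F i + c * F (i + 2))) (i : ℕ) :
    F i = F 0 * (X * weightedDyckSeries c) ^ i := by
  refine congrFun (eq_of_three_term_recurrence (c := c)
    (G := fun i ↦ F 0 * (X * weightedDyckSeries c) ^ i) (by simp) hF fun i ↦ ?_) i
  linear_combination F 0 * (X * weightedDyckSeries c) ^ i * X * weightedDyckSeries_eq c

theorem generating_functions_geometric_progression_general {c : R} {A : ℕ → ℕ → R}
    (hA_init : ∀ i, A (i + 1) 0 = 0)
    (hA_succ : ∀ i n, A (i + 1) (n + 1) = A i n + c * A (i + 2) n) (i : ℕ) :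
    PowerSeries.mk (A i) = PowerSeries.mk (A 0) * (X * weightedDyckSeries (C c)) ^ i := by
  refine eq_mul_pow_of_three_term_recurrence (F := fun i ↦ PowerSeries.mk (A i)) (fun i ↦ ?_) i
  ext (_ | n)
  · simp [hA_init]
  · simp [hA_succ, coeff_succ_X_mul]

end ThreeTermRecurrence

theorem generating_functions_geometric_progression (m : ℕ) (hm : 2 ≤ m) (A : ℕ → ℕ → ℕ)
    (hA_init : ∀ i, A i 0 = if i = 0 then 1 else 0)
    (hA_zero : ∀ n, A 0 (n + 1) = m * A 1 n)
    (hA_succ : ∀ i n, A (i + 1) (n + 1) = A i n + (m - 1) * A (i + 2) n)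
    (F : ℕ → PowerSeries ℚ) (hF : ∀ i, F i = PowerSeries.mk fun n => (A i n : ℚ)) :
    ∀ i : ℕ, 1 ≤ i → F (i - 1) * F (i + 1) = F i ^ 2 := by
  have hgeom (j : ℕ) : F j = F 0 * (X * weightedDyckSeries (C ((m - 1 : ℕ) : ℚ))) ^ j := by
    simpa only [hF] using generating_functions_geometric_progression_general
      (A := fun i n ↦ (A i n : ℚ)) (by simp [hA_init]) (by simp [hA_succ]) j
  rintro (_ | i) hi
  · contradiction
  · rw [add_tsub_cancel_right, hgeom i, hgeom (i + 1), hgeom (i + 1 + 1)]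
    ring
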